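/- Let a, b, c be real numbers with c > a > 0, and let x ∈ (0,1). Then sgn(D_c F(a,b,c,x)) = −sgn(b), where D_c F denotes the partial derivative of F(a,b,c,x) with respect to the parameter c. -/

import Mathlib

/-- The rising factorial (Pochhammer symbol): `(y)_j = y(y+1)⋯(y+j-1)`, `(y)_0 = 1`. -/
noncomputable def risingFactorial (y : ℝ) : ℕ → ℝ
  | 0 => 1
  | m + 1 => risingFactorial y m * (y + m)

/-- The Gaussian hypergeometric function
`F(a,b,c,x) = ∑_{j≥0} (a)_j (b)_j / ((c)_j j!) xʲ`. -/
noncomputable def hypF (a b c x : ℝ) : ℝ :=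
  ∑' j : ℕ, risingFactorial a j * risingFactorial b j /
    (risingFactorial c j * (Nat.factorial j : ℝ)) * x ^ j
open MeasureTheory ProbabilityTheory Filter Topology

lemma rf_pos {y : ℝ} (hy : 0 < y) (j : ℕ) : 0 < risingFactorial y j := by
  induction j with
  | zero => simp [risingFactorial]
  | succ n ih => simp only [risingFactorial]; positivity

lemma rf_mono {y z : ℝ} (hy : 0 < y) (hz : y ≤ z) (j : ℕ) :
    risingFactorial y j ≤ risingFactorial z j := by
  induction j with
  | zero => simp [risingFactorial]
  | succ n ih =>
    simp only [risingFactorial]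
    have := rf_pos hy n
    have := rf_pos (hy.trans_le hz) n
    gcongr

lemma rf_abs (y : ℝ) (j : ℕ) : |risingFactorial y j| ≤ risingFactorial (|y| + 1) j := by
  induction j with
  | zero => simp [risingFactorial]
  | succ n ih =>
    simp only [risingFactorial, abs_mul]
    have h1 : |y + n| ≤ |y| + 1 + n := by
      have := abs_add_le y n
      rw [abs_of_nonneg (Nat.cast_nonneg (α := ℝ) n)] at this
      linarith
    have := rf_pos (y := |y| + 1) (by positivity) n
    gcongr

lemma rf_smeval (y : ℝ) (j : ℕ) :
    (ascPochhammer ℕ j).smeval y = risingFactorial y j := by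
  induction j with
  | zero => simp [risingFactorial]
  | succ n ih =>
    rw [ascPochhammer_succ_right, Polynomial.smeval_mul, ih]
    simp [risingFactorial, Polynomial.smeval_add, Polynomial.smeval_X, Polynomial.smeval_natCast]

lemma rf_choose (y : ℝ) (j : ℕ) :
    Ring.choose (y + j - 1) j = risingFactorial y j / (Nat.factorial j : ℝ) := by
  have := Ring.factorial_nsmul_multichoose_eq_ascPochhammer y j
  rw [rf_smeval, Ring.multichoose_eq, nsmul_eq_mul] at this
  rw [← this]
  have : (Nat.factorial j : ℝ) ≠ 0 := by positivity
  field_simp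

lemma rf_series (b y : ℝ) (hy0 : 0 ≤ y) (hy : y < 1) :
    HasSum (fun j : ℕ => risingFactorial b j / (Nat.factorial j : ℝ) * y ^ j)
      (1 / (1 - y) ^ b) := by
  have h := (Real.one_div_one_sub_rpow_hasFPowerSeriesOnBall_zero b).hasSum (y := y) (by
    rw [Metric.mem_eball, edist_zero_right, ← ofReal_norm, ENNReal.ofReal_lt_one,
      Real.norm_of_nonneg hy0]; exact hy)
  simp only [zero_add, FormalMultilinearSeries.ofScalars_apply_eq, rf_choose, smul_eq_mul] at h
  exact h

lemma rf_summable (b x : ℝ) (hx0 : 0 < x) (hx1 : x < 1) :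
    Summable (fun j : ℕ => |risingFactorial b j| / (Nat.factorial j : ℝ) * x ^ j * (j + 1)) := by
  set B := |b| + 1
  have hB : 0 < B := by positivity
  have hs : Summable (fun j : ℕ => risingFactorial B j / (Nat.factorial j : ℝ) * x ^ j * (j + 1)) := by
    refine summable_of_ratio_test_tendsto_lt_one hx1 ?_ ?_
    · refine Eventually.of_forall fun j => ?_
      have := rf_pos hB j
      positivity
    · have key : ∀ j : ℕ, ‖risingFactorial B (j+1) / (Nat.factorial (j+1) : ℝ) * x ^ (j+1) * ((j+1 : ℕ) + 1)‖
          / ‖risingFactorial B j / (Nat.factorial j : ℝ) * x ^ j * (j + 1)‖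
          = (1 + (B - 1) * (1 / ((j:ℝ) + 1))) * x * (1 + 1 / ((j:ℝ) + 1)) := by
        intro j
        have h1 := rf_pos hB j
        have h2 := rf_pos hB (j+1)
        rw [Real.norm_of_nonneg (by positivity), Real.norm_of_nonneg (by positivity)]
        simp only [risingFactorial, Nat.factorial_succ]
        push_cast
        field_simp
        ring
      simp_rw [key]
      have h := tendsto_one_div_add_atTop_nhds_zero_nat (𝕜 := ℝ)
      have := (((h.const_mul (B - 1)).const_add 1).mul_const x).mul (h.const_add 1)
      simpa using this
  refine Summable.of_nonneg_of_le (fun j => by positivity) (fun j => ?_) hs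
  have := rf_abs b j
  gcongr

lemma rf_beta {α β : ℝ} (hα : 0 < α) (hβ : 0 < β) (j : ℕ) :
    beta (α + j) β / beta α β = risingFactorial α j / risingFactorial (α + β) j := by
  induction j with
  | zero => simp [risingFactorial, (beta_pos hα hβ).ne']
  | succ n ih =>
    have e : beta (α + (n + 1 : ℕ)) β = beta (α + n) β * ((α + n) / (α + β + n)) := by
      simp only [beta]
      have h1 : Real.Gamma (α + (n + 1 : ℕ)) = (α + n) * Real.Gamma (α + n) := by
        rw [← Real.Gamma_add_one (by positivity)]; push_cast; ring_nf
      have h2 : Real.Gamma (α + (n + 1 : ℕ) + β) = (α + β + n) * Real.Gamma (α + n + β) := by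
        rw [show α + n + β = α + β + n by ring, ← Real.Gamma_add_one (by positivity)]
        push_cast; ring_nf
      rw [h1, h2]
      have := Real.Gamma_pos_of_pos (s := α + n + β) (by positivity)
      field_simp
    rw [e, mul_div_right_comm, ih]
    simp only [risingFactorial]
    rw [div_mul_div_comm]

lemma betaPDFReal_nn {α β : ℝ} (hα : 0 < α) (hβ : 0 < β) (t : ℝ) : 0 ≤ betaPDFReal α β t := by
  by_cases h : 0 < t ∧ t < 1
  · exact (betaPDFReal_pos h.1 h.2 hα hβ).le
  · simp [betaPDFReal, h]

lemma integral_betaPDFReal {α β : ℝ} (hα : 0 < α) (hβ : 0 < β) :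
    ∫ t, betaPDFReal α β t = 1 := by
  rw [integral_eq_lintegral_of_nonneg_ae (Eventually.of_forall (betaPDFReal_nn hα hβ))
    (measurable_betaPDFReal α β).aestronglyMeasurable]
  have := lintegral_betaPDF_eq_one hα hβ
  simp only [betaPDF] at this
  rw [this]; simp

lemma beta_moment {α β : ℝ} (hα : 0 < α) (hβ : 0 < β) (j : ℕ) :
    ∫ t, t ^ j ∂(betaMeasure α β) = risingFactorial α j / risingFactorial (α + β) j := by
  have hm : Measurable (betaPDF α β) := by unfold betaPDF; fun_prop
  rw [betaMeasure, integral_withDensity_eq_integral_toReal_smul hm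
    (Eventually.of_forall fun t => by simp [betaPDF])]
  have : ∀ t, (betaPDF α β t).toReal • t ^ j
      = (beta (α + j) β / beta α β) * betaPDFReal (α + j) β t := by
    intro t
    rw [betaPDF, ENNReal.toReal_ofReal (betaPDFReal_nn hα hβ t), smul_eq_mul]
    by_cases h : 0 < t ∧ t < 1
    · have h1 := beta_pos hα hβ
      have h2 := beta_pos (α := α + j) (by positivity) hβ
      simp only [betaPDFReal, h, and_self, if_true]
      rw [show α + j - 1 = (α - 1) + j by ring, Real.rpow_add_natCast h.1.ne']
      field_simp
    · simp [betaPDFReal, h]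
  simp_rw [this]
  rw [integral_const_mul, integral_betaPDFReal (by positivity) hβ, mul_one, rf_beta hα hβ]

lemma beta_ae (α β : ℝ) : ∀ᵐ t ∂(betaMeasure α β), t ∈ Set.Ioo (0:ℝ) 1 := by
  have hm : Measurable (betaPDF α β) := by unfold betaPDF; fun_prop
  rw [betaMeasure, ae_withDensity_iff hm]
  refine Eventually.of_forall fun t ht => ?_
  by_contra h
  apply ht
  simp only [Set.mem_Ioo] at h
  simp [betaPDF, betaPDFReal, h]

/-- Harmonic-type sum. -/
noncomputable def hSum (c : ℝ) (j : ℕ) : ℝ := ∑ k ∈ Finset.range j, 1 / (c + k)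

lemma rf_hasDeriv {c : ℝ} (hc : 0 < c) (j : ℕ) :
    HasDerivAt (fun c' => risingFactorial c' j) (risingFactorial c j * hSum c j) c := by
  induction j with
  | zero => simpa [risingFactorial, hSum] using hasDerivAt_const c (1:ℝ)
  | succ n ih =>
    simp only [risingFactorial]
    have := ih.mul ((hasDerivAt_id c).add_const (n:ℝ))
    refine this.congr_deriv ?_
    simp only [hSum, Finset.sum_range_succ, id]
    have : c + n ≠ 0 := by positivity
    field_simp

lemma hSum_nonneg {c : ℝ} (hc : 0 < c) (j : ℕ) : 0 ≤ hSum c j :=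
  Finset.sum_nonneg fun k _ => by positivity

lemma hSum_le {a c : ℝ} (ha : 0 < a) (hc : a < c) (j : ℕ) : hSum c j ≤ (j + 1) * (1 / a) := by
  calc hSum c j ≤ ∑ k ∈ Finset.range j, 1 / a := by
        refine Finset.sum_le_sum fun k _ => ?_
        apply one_div_le_one_div_of_le ha
        have : (0:ℝ) ≤ k := by positivity
        linarith
    _ = j * (1 / a) := by simp
    _ ≤ _ := by gcongr; linarith

/-- The general term of the series. -/
noncomputable def gT (a b x : ℝ) (j : ℕ) (c : ℝ) : ℝ := risingFactorial a j * risingFactorial b j /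
    (risingFactorial c j * (Nat.factorial j : ℝ)) * x ^ j

lemma gT_abs {a b x c : ℝ} (ha : 0 < a) (hac : a < c) (hx0 : 0 < x) (j : ℕ) :
    |gT a b x j c| ≤ |risingFactorial b j| / (Nat.factorial j : ℝ) * x ^ j := by
  have h1 := rf_pos ha j
  have h2 := rf_pos (ha.trans hac) j
  have h3 := rf_mono ha hac.le j
  have e : gT a b x j c = (risingFactorial a j / risingFactorial c j) *
      (risingFactorial b j / (Nat.factorial j : ℝ) * x ^ j) := by
    unfold gT; field_simp
  rw [e, abs_mul, abs_mul, abs_div (risingFactorial b j), abs_of_pos (pow_pos hx0 j),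
    abs_of_pos (div_pos h1 h2), abs_of_pos (a := (Nat.factorial j : ℝ)) (by positivity)]
  exact mul_le_of_le_one_left (by positivity) ((div_le_one h2).2 h3)

lemma hyp_deriv {a b c x : ℝ} (ha : 0 < a) (hac : a < c) (hx0 : 0 < x) (hx1 : x < 1) :
    HasDerivAt (fun c' => hypF a b c' x) (∑' j, -(gT a b x j c * hSum c j)) c := by
  have hs := rf_summable b x hx0 hx1
  refine hasDerivAt_tsum_of_isPreconnected (t := Set.Ioi a) (g := gT a b x) (y₀ := c)
    (g' := fun j c => -(gT a b x j c * hSum c j)) (hs.mul_right (1 / a))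
    isOpen_Ioi isPreconnected_Ioi ?_ ?_ hac ?_ hac
  · intro j y hy
    have hy0 : 0 < y := ha.trans hy
    have h := rf_pos hy0 j
    have h1 := ((rf_hasDeriv hy0 j).mul_const (Nat.factorial j : ℝ))
    have h2 := ((hasDerivAt_const y (risingFactorial a j * risingFactorial b j)).div h1
      (by positivity)).mul_const (x ^ j)
    refine h2.congr_deriv ?_
    unfold gT
    field_simp
    ring
  · intro j y hy
    have hy0 : 0 < y := ha.trans hy
    rw [norm_neg, norm_mul, Real.norm_eq_abs, Real.norm_of_nonneg (hSum_nonneg hy0 j), mul_assoc]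
    exact mul_le_mul (gT_abs ha hy hx0 j) (hSum_le ha hy j) (hSum_nonneg hy0 j) (by positivity)
  · refine Summable.of_norm_bounded hs fun j => ?_
    refine (gT_abs ha hac hx0 j).trans ?_
    apply le_mul_of_one_le_right (by positivity)
    have : (0:ℝ) ≤ j := by positivity
    linarith

/-- The integrand terms. -/
noncomputable def fT (b x : ℝ) (j : ℕ) (p : ℝ × ℝ) : ℝ :=
  (risingFactorial b j / (Nat.factorial j : ℝ) * x ^ j) *
    (p.1 ^ j * ∑ k ∈ Finset.range j, p.2 ^ k)

lemma fT_abs {b x : ℝ} (hx0 : 0 < x) (j : ℕ) (p : ℝ × ℝ) (h1 : p.1 ∈ Set.Ioo (0:ℝ) 1)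
    (h2 : p.2 ∈ Set.Ioo (0:ℝ) 1) :
    ‖fT b x j p‖ ≤ |risingFactorial b j| / (Nat.factorial j : ℝ) * x ^ j * (j + 1) := by
  have hp1 := h1.1.le
  have hp2 := h2.1.le
  have hS0 : 0 ≤ ∑ k ∈ Finset.range j, p.2 ^ k := Finset.sum_nonneg fun k _ => by positivity
  have hS : ∑ k ∈ Finset.range j, p.2 ^ k ≤ j := by
    calc _ ≤ ∑ k ∈ Finset.range j, (1:ℝ) :=
          Finset.sum_le_sum fun k _ => pow_le_one₀ hp2 h2.2.le
      _ = j := by simp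
  have hP : p.1 ^ j ≤ 1 := pow_le_one₀ hp1 h1.2.le
  unfold fT
  rw [norm_mul, norm_mul, norm_div, Real.norm_of_nonneg (mul_nonneg (by positivity) hS0),
    Real.norm_eq_abs, Real.norm_of_nonneg (r := x ^ j) (by positivity) , Real.norm_natCast]
  gcongr
  calc _ ≤ 1 * (j:ℝ) := mul_le_mul hP hS hS0 zero_le_one
    _ ≤ _ := by linarith

/-- The closed form of the integrand. -/
noncomputable def phi (b x : ℝ) (p : ℝ × ℝ) : ℝ :=
  (1 / (1 - x * p.1) ^ b - 1 / (1 - x * p.1 * p.2) ^ b) / (1 - p.2)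

lemma fT_tsum {b x : ℝ} (hx0 : 0 < x) (hx1 : x < 1) (p : ℝ × ℝ) (h1 : p.1 ∈ Set.Ioo (0:ℝ) 1)
    (h2 : p.2 ∈ Set.Ioo (0:ℝ) 1) : ∑' j, fT b x j p = phi b x p := by
  have ha : 0 < x * p.1 := mul_pos hx0 h1.1
  have hb : x * p.1 < 1 := by nlinarith [h1.1, h1.2]
  have hc : 0 < x * p.1 * p.2 := mul_pos ha h2.1
  have hd : x * p.1 * p.2 < 1 := by nlinarith [h2.1, h2.2]
  have := ((rf_series b _ ha.le hb).sub (rf_series b _ hc.le hd)).div_const (1 - p.2)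
  rw [phi, ← this.tsum_eq]
  congr 1
  ext j
  have h3 : p.2 - 1 ≠ 0 := by linarith [h2.2]
  have h4 : 1 - p.2 ≠ 0 := by linarith [h2.2]
  rw [fT, geom_sum_eq (by linarith [h2.2]), mul_pow, mul_pow, mul_pow]
  field_simp
  ring

lemma phi_sign {b x : ℝ} (hb : b ≠ 0) (hx0 : 0 < x) (hx1 : x < 1) (p : ℝ × ℝ)
    (h1 : p.1 ∈ Set.Ioo (0:ℝ) 1)
    (h2 : p.2 ∈ Set.Ioo (0:ℝ) 1) : 0 < b * phi b x p := by
  have ha : 0 < x * p.1 := mul_pos hx0 h1.1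
  have hb' : x * p.1 < 1 := by nlinarith [h1.1, h1.2]
  have hd : x * p.1 * p.2 < x * p.1 := by nlinarith [h2.1, h2.2]
  have e1 : 0 < 1 - x * p.1 := by linarith
  have e2 : 1 - x * p.1 < 1 - x * p.1 * p.2 := by linarith
  have e3 : 0 < 1 - p.2 := by linarith [h2.2]
  have q1 := Real.rpow_pos_of_pos e1 b
  have q2 := Real.rpow_pos_of_pos (e1.trans e2) b
  unfold phi
  rcases lt_or_gt_of_ne hb with h | h
  · apply mul_pos_of_neg_of_neg h
    apply div_neg_of_neg_of_pos _ e3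
    rw [sub_neg]
    exact one_div_lt_one_div_of_lt q2 (Real.rpow_lt_rpow_of_neg e1 e2 h)
  · apply mul_pos h
    apply div_pos _ e3
    rw [sub_pos]
    exact one_div_lt_one_div_of_lt q1 (Real.rpow_lt_rpow e1.le e2 h)

lemma rf_ratio {c : ℝ} (hc : 0 < c) (k : ℕ) :
    risingFactorial c k / risingFactorial (c + 1) k = c * (1 / (c + k)) := by
  induction k with
  | zero => simp [risingFactorial, hc.ne']
  | succ n ih =>
    simp only [risingFactorial]
    rw [mul_div_mul_comm, ih]
    push_cast
    have : c + n ≠ 0 := by positivity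
    have : c + 1 + n ≠ 0 := by positivity
    field_simp
    ring

lemma main_integral {a b c x : ℝ} (ha : 0 < a) (hac : a < c) (hx0 : 0 < x) (hx1 : x < 1) :
    ∃ M : Measure (ℝ × ℝ), IsProbabilityMeasure M ∧
      (∀ᵐ p ∂M, p.1 ∈ Set.Ioo (0:ℝ) 1 ∧ p.2 ∈ Set.Ioo (0:ℝ) 1) ∧
      Integrable (phi b x) M ∧
      ∫ p, phi b x p ∂M = c * ∑' j, gT a b x j c * hSum c j := by
  have hc := ha.trans hac
  have hca : 0 < c - a := sub_pos.2 hac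
  have := isProbabilityMeasureBeta ha hca
  have := isProbabilityMeasureBeta hc one_pos
  set μ := betaMeasure a (c - a) with hμ
  set ν := betaMeasure c 1 with hν
  have hae : ∀ᵐ p ∂(μ.prod ν), p.1 ∈ Set.Ioo (0:ℝ) 1 ∧ p.2 ∈ Set.Ioo (0:ℝ) 1 :=
    (Measure.quasiMeasurePreserving_fst.ae (beta_ae a (c - a))).and
      (Measure.quasiMeasurePreserving_snd.ae (beta_ae c 1))
  have hs := rf_summable b x hx0 hx1
  have hmeas : ∀ j, Measurable (fT b x j) := by
    intro j; unfold fT; fun_prop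
  have hint : ∀ j, Integrable (fT b x j) (μ.prod ν) := fun j =>
    Integrable.of_bound (hmeas j).aestronglyMeasurable _
      (hae.mono fun p hp => fT_abs hx0 j p hp.1 hp.2)
  have hsum : Summable fun j => ∫ p, ‖fT b x j p‖ ∂(μ.prod ν) := by
    refine Summable.of_nonneg_of_le (fun j => integral_nonneg fun p => norm_nonneg _)
      (fun j => ?_) hs
    have := integral_mono_ae (hint j).norm (integrable_const _)
      (hae.mono fun p hp => fT_abs hx0 j p hp.1 hp.2)
    simpa using this
  have H := hasSum_integral_of_summable_integral_norm hint hsum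
  have hcongr : (fun p => ∑' j, fT b x j p) =ᵐ[μ.prod ν] phi b x :=
    hae.mono fun p hp => fT_tsum hx0 hx1 p hp.1 hp.2
  rw [integral_congr_ae hcongr] at H
  refine ⟨μ.prod ν, inferInstance, hae, ?_, ?_⟩
  · refine Integrable.of_bound (C := ∑' j : ℕ, |risingFactorial b j| / (Nat.factorial j : ℝ) * x ^ j * (j + 1))
      ?_ ?_
    · refine Measurable.aestronglyMeasurable ?_
      unfold phi
      fun_prop
    · refine hae.mono fun p hp => ?_
      rw [← fT_tsum hx0 hx1 p hp.1 hp.2]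
      exact tsum_of_norm_bounded hs.hasSum fun j => fT_abs hx0 j p hp.1 hp.2
  · rw [← H.tsum_eq, ← tsum_mul_left]
    congr 1
    ext j
    have e1 : ∫ t, t ^ j ∂μ = risingFactorial a j / risingFactorial c j := by
      rw [hμ, beta_moment ha hca]; congr 2; ring
    have hik : ∀ k : ℕ, Integrable (fun s : ℝ => s ^ k) ν := fun k =>
      Integrable.of_bound (C := 1) (by fun_prop) ((beta_ae c 1).mono fun s hs => by
        rw [Real.norm_of_nonneg (pow_nonneg hs.1.le k)]
        exact pow_le_one₀ hs.1.le hs.2.le)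
    have e2 : ∫ s, ∑ k ∈ Finset.range j, s ^ k ∂ν = c * hSum c j := by
      rw [integral_finsetSum _ fun k _ => hik k, hSum, Finset.mul_sum]
      refine Finset.sum_congr rfl fun k _ => ?_
      rw [hν, beta_moment hc one_pos, rf_ratio hc]
    unfold fT
    rw [integral_const_mul, integral_prod_mul (fun t : ℝ => t ^ j)
      (fun s : ℝ => ∑ k ∈ Finset.range j, s ^ k), e1, e2]
    have := rf_pos hc j
    unfold gT
    field_simp

/-- For `c > a > 0` and `0 < x < 1`, `sgn(D_c F(a,b,c,x)) = -sgn(b)`. -/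
theorem stmt11 (a b c x : ℝ) (ha : 0 < a) (hac : a < c)
    (hx : x ∈ Set.Ioo (0 : ℝ) 1) :
    Real.sign (deriv (fun c' : ℝ => hypF a b c' x) c) = -Real.sign b := by
  obtain ⟨hx0, hx1⟩ := hx
  rw [(hyp_deriv ha hac hx0 hx1).deriv, tsum_neg, Real.sign_neg]
  congr 1
  have hc := ha.trans hac
  obtain ⟨M, hM, hae, hI, hE⟩ := main_integral (b := b) ha hac hx0 hx1
  set T := ∑' j, gT a b x j c * hSum c j
  by_cases hb : b = 0
  · have : c * T = 0 := by rw [← hE]; simp [hb, phi]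
    have : T = 0 := by simpa [hc.ne'] using this
    rw [this, hb]
  · have hpos : ∀ᵐ p ∂M, 0 < b * phi b x p :=
      hae.mono fun p hp => phi_sign hb hx0 hx1 p hp.1 hp.2
    have hnn : 0 ≤ᵐ[M] fun p => b * phi b x p := hpos.mono fun p hp => hp.le
    have h0 : 0 ≤ ∫ p, b * phi b x p ∂M := integral_nonneg_of_ae hnn
    have hne : ∫ p, b * phi b x p ∂M ≠ 0 := by
      intro h
      rw [integral_eq_zero_iff_of_nonneg_ae hnn (hI.const_mul b)] at h
      have : ∀ᵐ p ∂M, False := by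
        filter_upwards [h, hpos] with p h1 h2
        simp only [Pi.zero_apply] at h1
        linarith
      obtain ⟨p, hp⟩ := this.exists
      exact hp
    have hlt := lt_of_le_of_ne h0 hne.symm
    rw [integral_const_mul, hE] at hlt
    have hbT : 0 < b * T := by
      have : b * (c * T) = c * (b * T) := by ring
      rw [this] at hlt
      exact pos_of_mul_pos_right hlt hc.le
    rcases lt_or_gt_of_ne hb with h | h
    · rw [Real.sign_of_neg h, Real.sign_of_neg]
      by_contra hT
      nlinarith
    · rw [Real.sign_of_pos h, Real.sign_of_pos (pos_of_mul_pos_right hbT h.le)]
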